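/- Let d ≥ 5. There exists a constant C < ∞ such that for all x ∈ ℝ^d: ∫_{ℝ^d} f_d(y)² f_d(x−y)² dy ≤ C · f_d(x)², i.e., the convolution of f_d² with itself is bounded by a constant multiple of f_d². -/

import Mathlib

/-!
The triangle inequality gives `‖x‖ ≤ ‖y‖ + ‖x - y‖`, so at least one of `1 + ‖y‖`, `1 + ‖x - y‖`
is at least `(1 + ‖x‖) / 2`, and the corresponding factor of the integrand is at most a constant
`K` times `fd d x ^ 2` (`fd_sq_le`). The integrand is therefore bounded pointwise by
`K * fd d x ^ 2 * (fd d y ^ 2 + fd d (x - y) ^ 2)`. For `d ≥ 5` the function `fd d ^ 2` is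
integrable, its exponent satisfying `2 * d - 4 > d` (`integrable_fd_sq`), and by translation
invariance `C = 2 * K * ∫ fd d ^ 2` works.
-/

open MeasureTheory

/-- `f_d(x) = (1+|x|)^{2−d}`. -/
noncomputable def fd (d : ℕ) (x : EuclideanSpace ℝ (Fin d)) : ℝ :=
  (1 + ‖x‖) ^ ((2 : ℝ) - d)

lemma fd_pos (d : ℕ) (x : EuclideanSpace ℝ (Fin d)) : 0 < fd d x :=
  Real.rpow_pos_of_pos (by positivity) _

lemma integrable_fd_sq (d : ℕ) (hd : 5 ≤ d) :
    Integrable (fun y : EuclideanSpace ℝ (Fin d) => fd d y ^ 2) := by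
  have hd' : (5 : ℝ) ≤ d := by exact_mod_cast hd
  have h := integrable_one_add_norm (E := EuclideanSpace ℝ (Fin d)) (μ := volume)
    (r := 2 * d - 4) (by rw [finrank_euclideanSpace_fin]; linarith)
  refine h.congr (Filter.Eventually.of_forall fun y => ?_)
  simp only [fd]
  rw [← Real.rpow_mul_natCast (by positivity)]
  congr 1
  push_cast
  ring

lemma fd_sq_le (d : ℕ) (hd : 5 ≤ d) (x y : EuclideanSpace ℝ (Fin d))
    (h : (1 + ‖x‖) / 2 ≤ 1 + ‖y‖) :
    fd d y ^ 2 ≤ ((1 / 2 : ℝ) ^ ((2 : ℝ) - d)) ^ 2 * fd d x ^ 2 := by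
  have hd' : (5 : ℝ) ≤ d := by exact_mod_cast hd
  rw [← mul_pow]
  refine pow_le_pow_left₀ (fd_pos d y).le ?_ 2
  unfold fd
  rw [← Real.mul_rpow (by norm_num) (by positivity)]
  exact Real.rpow_le_rpow_of_nonpos (by positivity) (by linarith) (by linarith)

theorem stmt19 (d : ℕ) (hd : 5 ≤ d) :
    ∃ C : ℝ, ∀ x : EuclideanSpace ℝ (Fin d),
      (∫ y : EuclideanSpace ℝ (Fin d), fd d y ^ 2 * fd d (x - y) ^ 2) ≤
        C * fd d x ^ 2 := by
  set K : ℝ := ((1 / 2 : ℝ) ^ ((2 : ℝ) - d)) ^ 2 with hK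
  have hK0 : 0 ≤ K := by positivity
  have hint := integrable_fd_sq d hd
  refine ⟨2 * K * ∫ y : EuclideanSpace ℝ (Fin d), fd d y ^ 2, fun x => ?_⟩
  have hint' := hint.comp_sub_left x
  calc (∫ y, fd d y ^ 2 * fd d (x - y) ^ 2)
      ≤ ∫ y, K * fd d x ^ 2 * (fd d y ^ 2 + fd d (x - y) ^ 2) := by
        refine integral_mono_of_nonneg (Filter.Eventually.of_forall fun y => by positivity)
          ((hint.add hint').const_mul _) (Filter.Eventually.of_forall fun y => ?_)
        change fd d y ^ 2 * fd d (x - y) ^ 2 ≤ K * fd d x ^ 2 * (fd d y ^ 2 + fd d (x - y) ^ 2)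
        have ha : 0 ≤ fd d y ^ 2 := by positivity
        have hb : 0 ≤ fd d (x - y) ^ 2 := by positivity
        have hM : 0 ≤ K * fd d x ^ 2 := by positivity
        have htri : ‖x‖ ≤ ‖y‖ + ‖x - y‖ := by
          simpa using norm_add_le y (x - y)
        rcases le_total ((1 + ‖x‖) / 2) (1 + ‖y‖) with h | h
        · have := fd_sq_le d hd x y h
          nlinarith [mul_le_mul_of_nonneg_right this hb, mul_nonneg hM ha]
        · have := fd_sq_le d hd x (x - y) (by linarith)
          nlinarith [mul_le_mul_of_nonneg_left this ha, mul_nonneg hM hb]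
    _ = 2 * K * (∫ y, fd d y ^ 2) * fd d x ^ 2 := by
        rw [integral_const_mul, integral_add hint hint',
          integral_sub_left_eq_self (fun y => fd d y ^ 2) volume x]
        ring
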